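/- Let H be a finite-dimensional semisimple Hopf algebra, A a noetherian left H-module algebra, R = A^H, B = A#H, and t the idempotent integral of H. For a right B-module M, M is t-torsion (i.e., m(A#t) is finite dimensional for all m ∈ M) if and only if Mt is a torsion right R-module (i.e., (mt)R is finite dimensional for all m ∈ M). -/

import Mathlib

open TensorProduct MulOpposite

/-- For a left `H`-module algebra `A`, the action on a fixed element `a ∈ A` as a
`k`-linear map `H →ₗ[k] A`, `h ↦ h • a`. -/
def actL (k H A : Type) [Field k] [Ring H] [Algebra k H] [Ring A] [Algebra k A]
    [Module H A] [IsScalarTower k H A] (a : A) : H →ₗ[k] A where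
  toFun h := h • a
  map_add' h h' := add_smul h h' a
  map_smul' c h := smul_assoc c h a

/-- A right `B`-module `M` is `t`-torsion when `m·(A#t)` is finite-dimensional for every
`m ∈ M`; here the smash product `B = A#H` is presented by a linear isomorphism
`ψ : A ⊗[k] H ≃ B`, and `a#t = ψ (a ⊗ t)`. -/
def IsTTorsion (k H A B : Type) [Field k] [Ring H] [Algebra k H] [Ring A] [Algebra k A]
    [Module H A] [IsScalarTower k H A] [Ring B] [Algebra k B]
    (ψ : (A ⊗[k] H) ≃ₗ[k] B) (t : H)
    (M : Type) [AddCommGroup M] [Module Bᵐᵒᵖ M] [Module k M] [IsScalarTower k Bᵐᵒᵖ M] :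
    Prop :=
  ∀ m : M, FiniteDimensional k
    (Submodule.span k {x | ∃ a : A, x = op (ψ (a ⊗ₜ[k] t)) • m})

/-!
The heart of the matter is that `A` is a finitely generated right module over `R = A^H`. Writing
`a = ∑ aᵢ rᵢ` with `rᵢ ∈ R` and using `(b#t)(r#1) = br#t` for `r ∈ R`, one gets
`m (A#t) = ∑ (m (aᵢ#1) t) R`, a finite sum of subspaces attached to elements of `Mt`; conversely
`(mt) R = m (R#t)` lies in `m (A#t)`.

For finite generation, the integral provides a skew antipode `S'`, i.e. `h₂ S'(h₁) = ε(h)`, and then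
`a (t • c) = t₂ • ((S'(t₁) • a) c)`. The right `A`-module generated by the tuples `(S'(t₁) • a)` for
`a ∈ A` is noetherian, so finitely many `aᵢ` generate it; applying `t₂ •` to
`S'(t₁) • a = ∑ (S'(t₁) • aᵢ) cᵢ` gives `a = ∑ aᵢ (t • cᵢ)`, with `t • cᵢ ∈ R`.
-/

open Coalgebra HopfAlgebra

section LeftContraction

variable {R M N : Type*} [CommSemiring R] [AddCommMonoid M] [Module R M]
  [AddCommMonoid N] [Module R N]

variable (R M N) in
/-- Contraction of the first tensor factor against a functional: `m ⊗ n ↦ f m • n`. -/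
noncomputable def leftContraction : Module.Dual R M →ₗ[R] M ⊗[R] N →ₗ[R] N :=
  (TensorProduct.lid R N).toLinearMap.compRight R ∘ₗ LinearMap.rTensorHom N

@[simp]
theorem leftContraction_tmul (f : Module.Dual R M) (m : M) (n : N) :
    leftContraction R M N f (m ⊗ₜ n) = f m • n := by
  simp [leftContraction]

end LeftContraction

section LeftContractionMul

variable {R H : Type*} [CommSemiring R] [Semiring H] [Algebra R H]

theorem leftContraction_one_tmul_mul (f : Module.Dual R H) (y : H) (X : H ⊗[R] H) :
    leftContraction R H H f ((1 ⊗ₜ y) * X) = y * leftContraction R H H f X := by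
  induction X with
  | zero => simp
  | tmul a b => simp
  | add X Y hX hY => simp only [mul_add, map_add, hX, hY]

theorem leftContraction_tmul_one_mul (f : Module.Dual R H) (x : H) (X : H ⊗[R] H) :
    leftContraction R H H f ((x ⊗ₜ 1) * X) =
      leftContraction R H H (f ∘ₗ LinearMap.mulLeft R x) X := by
  induction X with
  | zero => simp
  | tmul a b => simp
  | add X Y hX hY => simp only [mul_add, map_add, hX, hY]

end LeftContractionMul

section Integral

variable {R H : Type*} [CommSemiring R] [Semiring H]

variable (R) in
/-- `t` is a left integral of the bialgebra `H`, normalized by `ε(t) = 1`; equivalently, an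
idempotent nonzero left integral when `R` is a field. -/
structure IsNormalizedLeftIntegral [Bialgebra R H] (t : H) : Prop where
  counit_eq_one : counit (R := R) t = 1
  mul_eq_counit_smul (h : H) : h * t = counit (R := R) h • t

variable (R) in
/-- `S'` is a skew antipode of the bialgebra `H`: it satisfies `h₂ S'(h₁) = ε(h)`, that is, `S'` is
a convolution inverse of the identity for the opposite multiplication. -/
def IsSkewAntipode [Bialgebra R H] (S' : H →ₗ[R] H) : Prop :=
  LinearMap.mul' R H ∘ₗ (TensorProduct.comm R H H).toLinearMap ∘ₗ S'.rTensor H ∘ₗ comul =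
    Algebra.linearMap R H ∘ₗ counit

variable [HopfAlgebra R H]

theorem sum_antipode_tmul_one_mul_comul {ι : Type*} {h : H} (𝓡 : Repr R h ι) :
    ∑ i ∈ 𝓡.index, (antipode R (𝓡.left i) ⊗ₜ[R] (1 : H)) * comul (𝓡.right i) = 1 ⊗ₜ h := by
  let F : H ⊗[R] (H ⊗[R] H) →ₗ[R] H ⊗[R] H :=
    (LinearMap.mul' R H ∘ₗ (antipode R).rTensor H).rTensor H ∘ₗ
      (TensorProduct.assoc R H H H).symm.toLinearMap
  have F_tmul (x : H) (X : H ⊗[R] H) : F (x ⊗ₜ X) = (antipode R x ⊗ₜ 1) * X := by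
    induction X with
    | zero => simp
    | tmul y z => simp [F]
    | add X Y hX hY => simp only [TensorProduct.tmul_add, map_add, mul_add, hX, hY]
  calc
    _ = F (comul.lTensor H (comul h)) := by simp [← 𝓡.eq, F_tmul]
    _ = ((LinearMap.mul' R H ∘ₗ (antipode R).rTensor H ∘ₗ comul).rTensor H) (comul h) := by
      simp [F, ← LinearMap.comp_assoc, LinearMap.rTensor_comp_apply]
    _ = ((Algebra.linearMap R H).rTensor H) (counit.rTensor H (comul h)) := by
      rw [mul_antipode_rTensor_comul, LinearMap.rTensor_comp_apply]
    _ = 1 ⊗ₜ h := by simp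

namespace IsNormalizedLeftIntegral

variable {t : H}

theorem comul_mul_comul (ht : IsNormalizedLeftIntegral R t) (h : H) :
    comul h * comul t = counit (R := R) h • comul (R := R) t := by
  rw [← Bialgebra.comul_mul, ht.mul_eq_counit_smul, map_smul]

theorem one_tmul_mul_comul (ht : IsNormalizedLeftIntegral R t) (h : H) :
    (1 ⊗ₜ h) * comul (R := R) t = (antipode R h ⊗ₜ 1) * comul t := by
  let 𝓡 := ℛ R h
  have h_eq : ∑ i ∈ 𝓡.index, counit (R := R) (𝓡.right i) • 𝓡.left i = h := by
    simpa only [map_sum, TensorProduct.rid_tmul, one_smul] using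
      congr(TensorProduct.rid R H $(sum_tmul_counit_eq 𝓡))
  calc
    (1 ⊗ₜ h) * comul (R := R) t
      = ∑ i ∈ 𝓡.index, (antipode R (𝓡.left i) ⊗ₜ 1) * (comul (𝓡.right i) * comul t) := by
        simp only [← sum_antipode_tmul_one_mul_comul 𝓡, Finset.sum_mul, mul_assoc]
    _ = (antipode R (∑ i ∈ 𝓡.index, counit (R := R) (𝓡.right i) • 𝓡.left i) ⊗ₜ 1) * comul t := by
        simp only [ht.comul_mul_comul, mul_smul_comm, map_sum, map_smul, TensorProduct.sum_tmul,
          Finset.sum_mul, ← TensorProduct.smul_tmul', smul_mul_assoc]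
    _ = (antipode R h ⊗ₜ 1) * comul t := by rw [h_eq]

theorem exists_leftContraction_comul_eq_one [Module.Free R H]
    (ht : IsNormalizedLeftIntegral R t) :
    ∃ f : Module.Dual R H, leftContraction R H H f (comul t) = 1 := by
  let b := Module.Free.chooseBasis R H
  obtain ⟨y, hy⟩ := TensorProduct.eq_repr_basis_left b (comul (R := R) t)
  have contraction_coord (i) : leftContraction R H H (b.coord i) (comul t) = y i := by
    simp [← hy, Finsupp.sum, Finsupp.single_apply]
  -- The trace `x ↦ ∑ bᵢ*(S²(bᵢ) x)` of `h ↦ S²(h) x`, restricted to the `bᵢ` occurring in `Δ(t)`: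
  -- contracting with it gives `∑ S(bᵢ) yᵢ = S(t₁) t₂ = ε(t)`.
  refine ⟨∑ i ∈ y.support, b.coord i ∘ₗ LinearMap.mulLeft R (antipode R (antipode R (b i))), ?_⟩
  calc
    _ = ∑ i ∈ y.support, antipode R (b i) * y i := by
      simp only [map_sum, LinearMap.sum_apply, ← leftContraction_tmul_one_mul,
        ← ht.one_tmul_mul_comul, leftContraction_one_tmul_mul, contraction_coord]
    _ = LinearMap.mul' R H ((antipode R).rTensor H (comul t)) := by simp [← hy, Finsupp.sum]
    _ = 1 := by rw [mul_antipode_rTensor_comul_apply, ht.counit_eq_one, map_one]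

/-- If `f(t₁) t₂ = 1`, then `x ↦ f(x t₁) t₂` is a skew antipode, because
`f(h₁ t₁) h₂ t₂ = ε(h) f(t₁) t₂`. -/
theorem exists_isSkewAntipode [Module.Free R H] (ht : IsNormalizedLeftIntegral R t) :
    ∃ S' : H →ₗ[R] H, IsSkewAntipode R S' := by
  obtain ⟨f, hf⟩ := ht.exists_leftContraction_comul_eq_one
  let S' : H →ₗ[R] H := leftContraction R H H f ∘ₗ LinearMap.mulRight R (comul t) ∘ₗ
    (TensorProduct.mk R H H).flip 1
  have mul_comm_S' : LinearMap.mul' R H ∘ₗ (TensorProduct.comm R H H).toLinearMap ∘ₗ S'.rTensor H =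
      leftContraction R H H f ∘ₗ LinearMap.mulRight R (comul t) := by
    ext x y
    simp [S', ← leftContraction_one_tmul_mul, ← mul_assoc]
  refine ⟨S', LinearMap.ext fun h ↦ ?_⟩
  calc
    _ = leftContraction R H H f (comul h * comul t) := LinearMap.congr_fun mul_comm_S' (comul h)
    _ = algebraMap R H (counit h) := by
      rw [ht.comul_mul_comul, map_smul, hf, Algebra.algebraMap_eq_smul_one]

end IsNormalizedLeftIntegral

end Integral

section Finiteness

/-- A weak form of "a retract of a noetherian module is finite": neither the scalars nor the maps
`u` and `L` need be linear; it is enough that `L (s • u m)` is a multiple of `m`. -/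
theorem module_finite_of_isNoetherian_of_retraction {S V R M : Type*} [Semiring S] [AddCommMonoid V]
    [Module S V] [IsNoetherian S V] [Semiring R] [AddCommMonoid M] [Module R M]
    (u : M → V) (L : V →+ M) (τ : S → R) (hL : ∀ s m, L (s • u m) = τ s • m) (hτ : τ 1 = 1) :
    Module.Finite R M := by
  obtain ⟨F, hF, hspan⟩ := (Submodule.fg_span_iff_fg_span_finset_subset (R := S) (Set.range u)).1
    (IsNoetherian.noetherian _)
  choose g hg using fun v : F ↦ hF v.2
  have L_mem : ∀ v ∈ Submodule.span S (F : Set V), L v ∈ Submodule.span R (Set.range g) := by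
    intro v hv
    induction hv using Submodule.closure_induction with
    | zero => simp
    | add v w _ _ hv hw => simpa using add_mem hv hw
    | smul_mem s v hv =>
      have hL_v := hL s (g ⟨v, hv⟩)
      rw [hg] at hL_v
      exact hL_v ▸ Submodule.smul_mem _ _ (Submodule.subset_span ⟨⟨v, hv⟩, rfl⟩)
  refine ⟨Submodule.fg_def.2 ⟨_, Set.finite_range g, eq_top_iff.2 fun m _ ↦ ?_⟩⟩
  have Lu_mem := L_mem (u m) (hspan ▸ Submodule.subset_span ⟨m, rfl⟩)
  rwa [← one_smul S (u m), hL, hτ, one_smul] at Lu_mem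

theorem iSup_map_mulLeft_eq_top {R A : Type*} [CommSemiring R] [Semiring A] [Algebra R A]
    {S : Subalgebra R A} {F : Set A} (hF : Submodule.span S.op F = ⊤) :
    ⨆ a ∈ F, (Subalgebra.toSubmodule S).map (LinearMap.mulLeft R a) = ⊤ := by
  refine eq_top_iff.2 fun x _ ↦ ?_
  have hx : x ∈ Submodule.span S.op F := hF ▸ Submodule.mem_top
  induction hx using Submodule.closure_induction with
  | zero => exact zero_mem _
  | add x y _ _ hx hy => exact add_mem (hx trivial) (hy trivial)
  | smul_mem s a ha =>
    exact Submodule.mem_iSup_of_mem a (Submodule.mem_iSup_of_mem ha ⟨_, s.2, rfl⟩)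

theorem range_fg_of_forall_map_mulLeft_fg {R A M : Type*} [CommSemiring R] [Semiring A]
    [Algebra R A] [AddCommMonoid M] [Module R M] {S : Subalgebra R A} [Module.Finite S.op A]
    (f : A →ₗ[R] M)
    (hf : ∀ a, ((Subalgebra.toSubmodule S).map (f ∘ₗ LinearMap.mulLeft R a)).FG) :
    (LinearMap.range f).FG := by
  obtain ⟨F, hF⟩ := Module.Finite.fg_top (R := S.op) (M := A)
  rw [LinearMap.range_eq_map, ← iSup_map_mulLeft_eq_top hF]
  simp only [Submodule.map_iSup, ← Submodule.map_comp, Finset.mem_coe]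
  exact Submodule.fg_biSup F _ fun a _ ↦ hf a

instance isNoetherian_op_self (A : Type*) [Semiring A] [IsNoetherianRing Aᵐᵒᵖ] :
    IsNoetherian Aᵐᵒᵖ A :=
  isNoetherian_of_surjective (LinearMap.toSpanSingleton Aᵐᵒᵖ A 1)
    (LinearMap.range_eq_top.2 fun a ↦ ⟨op a, by simp⟩)

end Finiteness

theorem map_smulRight_counit_comul {R C M N : Type*} [CommSemiring R] [AddCommMonoid C]
    [Module R C] [Coalgebra R C] [AddCommMonoid M] [Module R M] [AddCommMonoid N] [Module R N]
    (m : M) (g : C →ₗ[R] N) (c : C) :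
    TensorProduct.map ((counit (R := R)).smulRight m) g (comul c) = m ⊗ₜ g c := by
  let 𝓡 := ℛ R c
  calc
    _ = m ⊗ₜ g (∑ i ∈ 𝓡.index, counit (R := R) (𝓡.left i) • 𝓡.right i) := by
      simp [← 𝓡.eq, TensorProduct.tmul_sum, TensorProduct.smul_tmul]
    _ = m ⊗ₜ g c := by rw [sum_counit_smul]

section ModuleAlgebra

variable {k H A : Type} [Field k] [Ring H] [Bialgebra k H] [Ring A] [Algebra k A] [Module H A]
  [IsScalarTower k H A]

@[simp]
theorem actL_apply (a : A) (h : H) : actL k H A a h = h • a := rfl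

variable (k H A) in
/-- `A` is a left `H`-module algebra: `h • (a b) = (h₁ • a) (h₂ • b)` and `h • 1 = ε(h) 1`. -/
class IsModuleAlgebra : Prop where
  smul_mul (h : H) (a b : A) :
    h • (a * b) = LinearMap.mul' k A (TensorProduct.map (actL k H A a) (actL k H A b) (comul h))
  smul_one (h : H) : h • (1 : A) = counit (R := k) h • (1 : A)

theorem actL_eq_smulRight {r : A} (hr : ∀ h : H, h • r = counit (R := k) h • r) :
    actL k H A r = (counit (R := k)).smulRight r :=
  LinearMap.ext hr

variable [IsModuleAlgebra k H A]

theorem smul_mul_of_invariant {r : A} (hr : ∀ h : H, h • r = counit (R := k) h • r) (h : H)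
    (a : A) : h • (r * a) = r * h • a := by
  rw [IsModuleAlgebra.smul_mul (k := k), actL_eq_smulRight hr, map_smulRight_counit_comul,
    LinearMap.mul'_apply, actL_apply]

variable (k H A) in
/-- The invariant subalgebra `A^H` of an `H`-module algebra `A`. -/
def invariants : Subalgebra k A where
  carrier := {r | ∀ h : H, h • r = counit (R := k) h • r}
  mul_mem' {r s} hr hs h := by rw [smul_mul_of_invariant hr, hs h, mul_smul_comm]
  add_mem' {r s} hr hs h := by rw [smul_add, hr h, hs h, smul_add]
  algebraMap_mem' c h := by
    rw [Algebra.algebraMap_eq_smul_one, smul_algebra_smul_comm, IsModuleAlgebra.smul_one (k := k),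
      smul_comm]

theorem IsSkewAntipode.sum_smul_mul {S' : H →ₗ[k] H} (hS' : IsSkewAntipode k S') {ι : Type*}
    {h : H} (𝓡 : Repr k h ι) (a c : A) :
    ∑ i ∈ 𝓡.index, 𝓡.right i • ((S' (𝓡.left i) • a) * c) = a * h • c := by
  let Q : H ⊗[k] H →ₗ[k] H :=
    LinearMap.mul' k H ∘ₗ (TensorProduct.comm k H H).toLinearMap ∘ₗ S'.rTensor H
  let F : H ⊗[k] (H ⊗[k] H) →ₗ[k] A :=
    LinearMap.mul' k A ∘ₗ TensorProduct.map (actL k H A a ∘ₗ Q) (actL k H A c) ∘ₗ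
      (TensorProduct.assoc k H H H).symm.toLinearMap
  have F_tmul (x y : H) : F (x ⊗ₜ comul y) = y • ((S' x • a) * c) := by
    rw [IsModuleAlgebra.smul_mul (k := k)]
    induction comul (R := k) y with
    | zero => simp
    | tmul y z => simp [F, Q, mul_smul]
    | add X Y hX hY => simp only [TensorProduct.tmul_add, map_add, hX, hY]
  have actL_comp_Q_comul : (actL k H A a ∘ₗ Q) ∘ₗ comul = (counit (R := k)).smulRight a := by
    rw [LinearMap.comp_assoc, show Q ∘ₗ comul = _ from hS']
    ext
    simp
  calc
    _ = F (comul.lTensor H (comul h)) := by simp [← 𝓡.eq, F_tmul]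
    _ = LinearMap.mul' k A
        (TensorProduct.map ((actL k H A a ∘ₗ Q) ∘ₗ comul) (actL k H A c) (comul h)) := by
      rw [← LinearMap.map_comp_rTensor]
      simp [F]
    _ = a * h • c := by
      rw [actL_comp_Q_comul, map_smulRight_counit_comul, LinearMap.mul'_apply, actL_apply]

theorem IsNormalizedLeftIntegral.smul_mem_invariants {t : H} (ht : IsNormalizedLeftIntegral k t)
    (a : A) : t • a ∈ invariants k H A := fun h ↦ by
  rw [← mul_smul, ht.mul_eq_counit_smul, smul_assoc]

end ModuleAlgebra

theorem IsNormalizedLeftIntegral.finite_invariants_op {k H A : Type} [Field k] [Ring H]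
    [HopfAlgebra k H] [Ring A] [Algebra k A] [Module H A] [IsScalarTower k H A]
    [IsModuleAlgebra k H A] [IsNoetherianRing Aᵐᵒᵖ] {t : H} (ht : IsNormalizedLeftIntegral k t) :
    Module.Finite (invariants k H A).op A := by
  obtain ⟨S', hS'⟩ := ht.exists_isSkewAntipode
  let 𝓡 := ℛ k t
  refine module_finite_of_isNoetherian_of_retraction (S := Aᵐᵒᵖ) (V := 𝓡.index → A)
    (u := fun a i ↦ S' (𝓡.left i) • a)
    (L := ∑ i : 𝓡.index,
      (DistribSMul.toAddMonoidHom A (𝓡.right i)).comp (Pi.evalAddMonoidHom (fun _ ↦ A) i))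
    (τ := fun c ↦ ⟨op (t • c.unop), ht.smul_mem_invariants _⟩) (fun c a ↦ ?_) ?_
  · rw [AddMonoidHom.finsetSum_apply]
    exact (𝓡.index.sum_coe_sort fun i ↦ 𝓡.right i • ((S' (𝓡.left i) • a) * c.unop)).trans
      (hS'.sum_smul_mul 𝓡 a c.unop)
  · ext
    simp [IsModuleAlgebra.smul_one (k := k), ht.counit_eq_one]

section OrbitMap

variable {R A H B M : Type*} [CommSemiring R] [AddCommMonoid A] [Module R A] [AddCommMonoid H]
  [Module R H] [Semiring B] [Algebra R B] [AddCommMonoid M] [Module Bᵐᵒᵖ M] [Module R M]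
  [IsScalarTower R Bᵐᵒᵖ M]

/-- For `m` in a right `B`-module, the map `a ↦ m (a#h)`, where `a#h = ψ (a ⊗ h)`. -/
def smashOrbitMap (ψ : A ⊗[R] H →ₗ[R] B) (h : H) (m : M) : A →ₗ[R] M :=
  (LinearMap.toSpanSingleton Bᵐᵒᵖ M m).restrictScalars R ∘ₗ
    (opLinearEquiv R).toLinearMap ∘ₗ ψ ∘ₗ (TensorProduct.mk R A H).flip h

@[simp]
theorem smashOrbitMap_apply (ψ : A ⊗[R] H →ₗ[R] B) (h : H) (m : M) (a : A) :
    smashOrbitMap ψ h m a = op (ψ (a ⊗ₜ h)) • m := rfl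

end OrbitMap

section SmashProduct

variable {k H A B M : Type} [Field k] [Ring H] [Bialgebra k H] [Ring A] [Algebra k A]
  [Module H A] [IsScalarTower k H A] [Ring B] [Algebra k B]

/-- The linear map `ψ : A ⊗ H → B`, `a ⊗ h ↦ a#h`, satisfies the multiplication rule of the smash
product, `(a#h)(b#g) = a (h₁ • b) # h₂ g`. -/
def IsSmashMul (ψ : A ⊗[k] H →ₗ[k] B) : Prop :=
  ∀ (a b : A) (h g : H), ψ (a ⊗ₜ h) * ψ (b ⊗ₜ g) =
    ψ (TensorProduct.map (LinearMap.mulLeft k a ∘ₗ actL k H A b) (LinearMap.mulRight k g) (comul h))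

namespace IsSmashMul

variable {ψ : A ⊗[k] H →ₗ[k] B}

theorem tmul_mul_tmul_of_invariant (hψ : IsSmashMul ψ) {r : A}
    (hr : ∀ h : H, h • r = counit (R := k) h • r) (a : A) (h g : H) :
    ψ (a ⊗ₜ h) * ψ (r ⊗ₜ g) = ψ ((a * r) ⊗ₜ (h * g)) := by
  have mulLeft_comp_actL :
      LinearMap.mulLeft k a ∘ₗ actL k H A r = (counit (R := k)).smulRight (a * r) := by
    rw [actL_eq_smulRight hr]
    ext
    simp
  rw [hψ, mulLeft_comp_actL, map_smulRight_counit_comul, LinearMap.mulRight_apply]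

variable [IsModuleAlgebra k H A] [AddCommGroup M] [Module Bᵐᵒᵖ M]

theorem op_tmul_smul (hψ : IsSmashMul ψ) (a : A) (h : H) (m : M) :
    op (ψ (a ⊗ₜ h)) • m = op (ψ (1 ⊗ₜ h)) • op (ψ (a ⊗ₜ 1)) • m := by
  rw [smul_smul, ← op_mul, hψ.tmul_mul_tmul_of_invariant (IsModuleAlgebra.smul_one (k := k)),
    mul_one, one_mul]

theorem map_smashOrbitMap_comp_mulLeft [Module k M] [IsScalarTower k Bᵐᵒᵖ M]
    (hψ : IsSmashMul ψ) (h : H) (m : M) (a : A) :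
    (Subalgebra.toSubmodule (invariants k H A)).map
        (smashOrbitMap ψ h m ∘ₗ LinearMap.mulLeft k a) =
      Submodule.span k {x | ∃ r ∈ invariants k H A, x = op (ψ (r ⊗ₜ 1)) • op (ψ (a ⊗ₜ h)) • m} := by
  rw [← Submodule.span_eq (Submodule.map _ _)]
  congr 1
  ext x
  refine exists_congr fun r ↦ and_congr_right fun hr ↦ ?_
  rw [smul_smul, ← op_mul, hψ.tmul_mul_tmul_of_invariant hr, mul_one, eq_comm]
  rfl

end IsSmashMul

end SmashProduct

section Torsion

variable {k H A B M : Type} [Field k] [Ring H] [Ring A] [Algebra k A] [Module H A] [Ring B]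
  [Algebra k B] [AddCommGroup M] [Module Bᵐᵒᵖ M] [Module k M] [IsScalarTower k Bᵐᵒᵖ M]

theorem isTTorsion_iff_range_smashOrbitMap_fg [Algebra k H] [IsScalarTower k H A]
    (ψ : A ⊗[k] H ≃ₗ[k] B) (t : H) :
    IsTTorsion k H A B ψ t M ↔ ∀ m : M, (LinearMap.range (smashOrbitMap ψ.toLinearMap t m)).FG := by
  refine forall_congr' fun m ↦ ?_
  rw [FiniteDimensional, Module.Finite.iff_fg, ← Submodule.span_eq (LinearMap.range _)]
  simp only [LinearMap.coe_range, Set.range, smashOrbitMap_apply, LinearEquiv.coe_coe, eq_comm]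

theorem tTorsion_iff_mt_torsion_general [HopfAlgebra k H] [IsScalarTower k H A]
    [IsModuleAlgebra k H A] [IsNoetherianRing Aᵐᵒᵖ] (ψ : A ⊗[k] H ≃ₗ[k] B)
    (hψ : IsSmashMul ψ.toLinearMap) {t : H} (ht : IsNormalizedLeftIntegral k t) :
    IsTTorsion k H A B ψ t M ↔
      ∀ m : M, FiniteDimensional k
        (Submodule.span k {x | ∃ r ∈ invariants k H A,
          x = op (ψ (r ⊗ₜ[k] (1 : H))) • (op (ψ ((1 : A) ⊗ₜ[k] t)) • m)}) := by
  rw [isTTorsion_iff_range_smashOrbitMap_fg]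
  constructor
  · intro hM m
    have := Module.Finite.of_fg (hM m)
    let f := smashOrbitMap ψ.toLinearMap t m ∘ₗ LinearMap.mulLeft k (1 : A)
    have map_le_range : (Subalgebra.toSubmodule (invariants k H A)).map f ≤ _ :=
      LinearMap.map_le_range.trans (LinearMap.range_comp_le_range _ _)
    rw [hψ.map_smashOrbitMap_comp_mulLeft] at map_le_range
    exact Submodule.finiteDimensional_of_le map_le_range
  · intro hM m
    have := ht.finite_invariants_op (A := A)
    refine range_fg_of_forall_map_mulLeft_fg (S := invariants k H A) _ fun a ↦ ?_
    rw [hψ.map_smashOrbitMap_comp_mulLeft, hψ.op_tmul_smul]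
    exact Module.Finite.iff_fg.1 (hM (op (ψ (a ⊗ₜ 1)) • m))

end Torsion

/-- Let `H` be a finite-dimensional semisimple Hopf algebra, `A` a noetherian left
`H`-module algebra, `R = A^H` the invariant subalgebra, `B = A#H` the smash product and
`t` the idempotent integral of `H`.  A right `B`-module `M` is `t`-torsion (i.e. `m(A#t)`
is finite-dimensional for all `m ∈ M`) if and only if `Mt` is a torsion right `R`-module
(i.e. `(mt)R` is finite-dimensional for all `m ∈ M`). -/
theorem tTorsion_iff_mt_torsion
    (k H A B : Type) [Field k] [CharZero k]
    [Ring H] [HopfAlgebra k H] [FiniteDimensional k H] [IsSemisimpleRing H]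
    [Ring A] [Algebra k A] [Module H A] [IsScalarTower k H A]
    [IsNoetherianRing A] [IsNoetherianRing Aᵐᵒᵖ]
    (hsmul_mul : ∀ (h : H) (a b : A), h • (a * b) =
      (LinearMap.mul' k A) ((TensorProduct.map (actL k H A a) (actL k H A b))
        (Coalgebra.comul h)))
    (hsmul_one : ∀ h : H, h • (1 : A) = (Coalgebra.counit (R := k) h) • (1 : A))
    [Ring B] [Algebra k B] (ψ : (A ⊗[k] H) ≃ₗ[k] B)
    (hψone : ψ ((1 : A) ⊗ₜ[k] (1 : H)) = 1)
    (hψmul : ∀ (a b : A) (h g : H), ψ (a ⊗ₜ[k] h) * ψ (b ⊗ₜ[k] g) =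
      ψ ((TensorProduct.map ((LinearMap.mulLeft k a).comp (actL k H A b))
        (LinearMap.mulRight k g)) (Coalgebra.comul h)))
    (t : H) (htcounit : Coalgebra.counit (R := k) t = 1)
    (htint : ∀ h : H, h * t = (Coalgebra.counit (R := k) h) • t)
    (M : Type) [AddCommGroup M] [Module Bᵐᵒᵖ M] [Module k M] [IsScalarTower k Bᵐᵒᵖ M] :
    IsTTorsion k H A B ψ t M ↔
      ∀ m : M, FiniteDimensional k
        (Submodule.span k {x | ∃ r : A,
          (∀ h : H, h • r = (Coalgebra.counit (R := k) h) • r) ∧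
          x = op (ψ (r ⊗ₜ[k] (1 : H))) • (op (ψ ((1 : A) ⊗ₜ[k] t)) • m)}) := by
  have : IsModuleAlgebra k H A := ⟨hsmul_mul, hsmul_one⟩
  exact tTorsion_iff_mt_torsion_general ψ hψmul ⟨htcounit, htint⟩
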